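/- Let s = s_1 s_2 s_3 … be any infinite sequence with each s_i ∈ {min, max}. For a permutation π of [n], define the statistic m_s(π) as the length k of the subsequence π_{i_1} π_{i_2} ⋯ π_{i_k} where π_{i_1} = s_1(π_1 π_2 ⋯ π_n), and for each j ≥ 2, π_{i_j} = s_j(π_{i_{j-1}+1} π_{i_{j-1}+2} ⋯ π_n), the process stopping at the first k with i_k = n. Then for all n ≥ 1 and k ≥ 1, the number of permutations π of [n] with m_s(π) = k equals the signless Stirling number of the first kind c(n,k). -/

import Mathlib

open Equiv Finset

/-- `π` is an up-down permutation of `[n]` in one-line notation (0-indexed):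
`π 0 < π 1 > π 2 < π 3 > ⋯`. -/
def IsUpDownPerm {n : ℕ} (π : Equiv.Perm (Fin n)) : Prop :=
  ∀ i j : Fin n, (j : ℕ) = (i : ℕ) + 1 →
    (((i : ℕ) % 2 = 0 → π i < π j) ∧ ((i : ℕ) % 2 = 1 → π j < π i))

/-- The Euler number `E n`: the number of up-down permutations of `[n]`. -/
noncomputable def eulerE (n : ℕ) : ℕ :=
  Nat.card {π : Equiv.Perm (Fin n) // IsUpDownPerm π}

/-- The length of the cycle of `π` containing `x` (fixed points give length `1`). -/
noncomputable def cycLen {n : ℕ} (π : Equiv.Perm (Fin n)) (x : Fin n) : ℕ :=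
  Function.minimalPeriod (⇑π) x

/-- `x` is the smallest element of its cycle of `π`. -/
def IsOrbitMin {n : ℕ} (π : Equiv.Perm (Fin n)) (x : Fin n) : Prop :=
  ∀ k : ℕ, x ≤ (π ^ k) x

/-- The cyclic representation `x, π x, π² x, …` (of length `cycLen π x`) of the
cycle of `π` containing `x` has the up-down pattern `x < π x > π² x < ⋯`. -/
def CycleUpDownAt {n : ℕ} (π : Equiv.Perm (Fin n)) (x : Fin n) : Prop :=
  ∀ i : ℕ, i + 1 < cycLen π x →
    ((i % 2 = 0 → (π ^ i) x < (π ^ (i + 1)) x) ∧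
     (i % 2 = 1 → (π ^ (i + 1)) x < (π ^ i) x))

/-- `π` is cycle-up-down: every cycle, written in standard form
(starting at its smallest element), is up-down. -/
def IsCUD {n : ℕ} (π : Equiv.Perm (Fin n)) : Prop :=
  ∀ x : Fin n, IsOrbitMin π x → CycleUpDownAt π x

/-- The number of cycles of `π` (fixed points included), counted via the
smallest elements of the cycles. -/
noncomputable def cycleCount {n : ℕ} (π : Equiv.Perm (Fin n)) : ℕ :=
  Nat.card {x : Fin n // IsOrbitMin π x}

/-- The number of cycles of `π` of even length. -/
noncomputable def evenCycleCount {n : ℕ} (π : Equiv.Perm (Fin n)) : ℕ :=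
  Nat.card {x : Fin n // IsOrbitMin π x ∧ Even (cycLen π x)}

/-- The number of cycles of `π` of odd length. -/
noncomputable def oddCycleCount {n : ℕ} (π : Equiv.Perm (Fin n)) : ℕ :=
  Nat.card {x : Fin n // IsOrbitMin π x ∧ Odd (cycLen π x)}

/-- The number of excedances of `π`. -/
noncomputable def excCount {n : ℕ} (π : Equiv.Perm (Fin n)) : ℕ :=
  Nat.card {i : Fin n // i < π i}

/-- The number of left-to-right minima of `π` (in one-line notation). -/
noncomputable def lrmCount {n : ℕ} (π : Equiv.Perm (Fin n)) : ℕ :=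
  Nat.card {i : Fin n // ∀ j : Fin n, j < i → π i < π j}

/-- The number of extreme elements of `π`: entries in position `≥ 2`
(0-indexed: position `≥ 1`) that are left-to-right minima or maxima. -/
noncomputable def extrCount {n : ℕ} (π : Equiv.Perm (Fin n)) : ℕ :=
  Nat.card {i : Fin n // (i : ℕ) ≠ 0 ∧
    ((∀ j : Fin n, j < i → π i < π j) ∨ (∀ j : Fin n, j < i → π j < π i))}

/-- Auxiliary (fuel-based) computation of the length of the `s`-driven
min/max subsequence of a list: at step `j` (0-indexed) pick the minimum of the
remaining list if `s j = true`, its maximum if `s j = false`, and continue with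
the part of the list strictly to the right of the picked entry. -/
def msLenAux : ℕ → (ℕ → Bool) → List ℕ → ℕ
  | 0, _, _ => 0
  | _, _, [] => 0
  | fuel + 1, s, a :: t =>
      let l := a :: t
      let v := if s 0 then l.foldr min a else l.foldr max a
      1 + msLenAux fuel (fun i => s (i + 1)) ((l.dropWhile (· != v)).tail)

/-- The length of the `s`-driven min/max subsequence of a list
(`s j = true` means minimum at step `j`, `s j = false` means maximum). -/
def msLen (s : ℕ → Bool) (l : List ℕ) : ℕ := msLenAux l.length s l

/-- The one-line notation of `π` as a list of natural numbers. -/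
def oneLine {n : ℕ} (π : Equiv.Perm (Fin n)) : List ℕ :=
  List.ofFn fun i => ((π i : ℕ))

/-- The statistic `m_s(π)`: the length of the `s`-driven min/max subsequence
of the one-line notation of `π`. -/
def msStat {n : ℕ} (s : ℕ → Bool) (π : Equiv.Perm (Fin n)) : ℕ :=
  msLen s (oneLine π)

/-- `st π`: the length of the min-max sequence of `π` (alternately take the
minimum, the maximum, the minimum, … of what remains to the right). -/
def stStat {n : ℕ} (π : Equiv.Perm (Fin n)) : ℕ :=
  msStat (fun i => i % 2 == 0) π

/-- `π` is a cyclic permutation: it consists of a single cycle. -/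
def IsCyclicPerm {n : ℕ} (π : Equiv.Perm (Fin n)) : Prop :=
  ∀ x y : Fin n, π.SameCycle x y

/-- The number of up-down cycles of `π` having length `k`. -/
noncomputable def udLenCount {n : ℕ} (π : Equiv.Perm (Fin n)) (k : ℕ) : ℕ :=
  Nat.card {x : Fin n // IsOrbitMin π x ∧ cycLen π x = k ∧ CycleUpDownAt π x}

/-- `ud π`: the number of up-down cycles of `π`. -/
noncomputable def udCount {n : ℕ} (π : Equiv.Perm (Fin n)) : ℕ :=
  Nat.card {x : Fin n // IsOrbitMin π x ∧ CycleUpDownAt π x}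

/-- `r n`: the number of permutations of `[n]` having no up-down cycles. -/
noncomputable def noUDCyclesCount (n : ℕ) : ℕ :=
  Nat.card {π : Equiv.Perm (Fin n) // ∀ x : Fin n, IsOrbitMin π x → ¬ CycleUpDownAt π x}

open Polynomial in
noncomputable def genP : ℕ → ℕ[X]
  | 0 => 1
  | n + 1 => (X + (n : ℕ[X])) * genP n

theorem foldr_min_least (a : ℕ) (t : List ℕ) :
    IsLeast {x | x ∈ a :: t} ((a :: t).foldr min a) := by
  induction t with
  | nil => simp [IsLeast, lowerBounds]
  | cons b t ih =>
    obtain ⟨h1, h2⟩ := ih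
    simp only [IsLeast, lowerBounds, Set.mem_ofPred_eq, List.foldr_cons, List.mem_cons] at *
    constructor
    · grind
    · intro x hx
      have h3 := @h2 x
      have h4 := @h2 a
      grind

theorem foldr_max_greatest (a : ℕ) (t : List ℕ) :
    IsGreatest {x | x ∈ a :: t} ((a :: t).foldr max a) := by
  induction t with
  | nil => simp [IsGreatest, upperBounds]
  | cons b t ih =>
    obtain ⟨h1, h2⟩ := ih
    simp only [IsGreatest, upperBounds, Set.mem_ofPred_eq, List.foldr_cons, List.mem_cons] at *
    constructor
    · grind
    · intro x hx
      have h3 := @h2 x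
      have h4 := @h2 a
      grind

/-- `v` is the chosen extreme of `l`. -/
def IsExtr (b : Bool) (l : List ℕ) (v : ℕ) : Prop :=
  v ∈ l ∧ ∀ x ∈ l, if b then v ≤ x else x ≤ v

theorem isExtr_pick (b : Bool) (a : ℕ) (t : List ℕ) :
    IsExtr b (a :: t) (if b then (a :: t).foldr min a else (a :: t).foldr max a) := by
  cases b
  · have h := foldr_max_greatest a t
    exact ⟨h.1, fun x hx => h.2 hx⟩
  · have h := foldr_min_least a t
    exact ⟨h.1, fun x hx => h.2 hx⟩

theorem IsExtr.unique {b : Bool} {l : List ℕ} {v w : ℕ} (h : IsExtr b l v) (h' : IsExtr b l w) :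
    v = w := by
  have h1 := h.2 w h'.1
  have h2 := h'.2 v h.1
  cases b <;> simp at h1 h2 <;> omega

theorem aux_cons {b : ℕ → Bool} (fuel : ℕ) {a : ℕ} {t : List ℕ} {v : ℕ}
    (h : IsExtr (b 0) (a :: t) v) :
    msLenAux (fuel + 1) b (a :: t) =
      1 + msLenAux fuel (fun i => b (i + 1)) (((a :: t).dropWhile (· != v)).tail) := by
  have := (isExtr_pick (b 0) a t).unique h
  rw [msLenAux]
  simp only [this]

theorem drop_len (a : ℕ) (t : List ℕ) (v : ℕ) :
    (((a :: t).dropWhile (· != v)).tail).length ≤ t.length := by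
  have := (List.dropWhile_sublist (l := a :: t) (fun x => x != v)).length_le
  simp only [List.length_tail, List.length_cons] at *
  omega

theorem aux_fuel (fuel : ℕ) : ∀ (s : ℕ → Bool) (l : List ℕ), l.length ≤ fuel →
    msLenAux fuel s l = msLen s l := by
  induction fuel using Nat.strong_induction_on with
  | _ fuel ih =>
  intro s l hl
  unfold msLen
  cases l with
  | nil => cases fuel <;> simp [msLenAux]
  | cons a t =>
    cases fuel with
    | zero => simp at hl
    | succ f =>
      simp only [List.length_cons] at hl ⊢
      have h := isExtr_pick (s 0) a t
      rw [aux_cons f h, aux_cons t.length h]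
      have hd := drop_len a t (if s 0 then (a :: t).foldr min a else (a :: t).foldr max a)
      rw [ih f (by omega) _ _ (by omega), ih t.length (by omega) _ _ hd]

theorem msLen_cons_extr {s : ℕ → Bool} {a : ℕ} {t : List ℕ} (h : IsExtr (s 0) (a :: t) a) :
    msLen s (a :: t) = 1 + msLen (fun i => s (i + 1)) t := by
  conv_lhs => unfold msLen
  rw [List.length_cons, aux_cons _ h]
  simp [msLen]

theorem msLen_cons_not_extr {s : ℕ → Bool} {a : ℕ} {t : List ℕ} (h : ¬ IsExtr (s 0) (a :: t) a) :
    msLen s (a :: t) = msLen s t := by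
  have h1 := isExtr_pick (s 0) a t
  generalize (if s 0 then (a :: t).foldr min a else (a :: t).foldr max a) = v at h1
  have hv : v ≠ a := by rintro rfl; exact h h1
  have hvt : v ∈ t := by have := h1.1; simp [hv] at this; exact this
  have h2 : IsExtr (s 0) t v := ⟨hvt, fun x hx => h1.2 x (List.mem_cons_of_mem _ hx)⟩
  conv_lhs => unfold msLen
  rw [List.length_cons, aux_cons _ h1]
  cases t with
  | nil => simp at hvt
  | cons b t =>
    rw [← aux_fuel ((b :: t).length + 1) s (b :: t) (by simp), aux_cons _ h2]
    have : (a != v) = true := by simp [hv.symm]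
    rw [List.dropWhile_cons_of_pos (p := fun x => x != v) this]

open Polynomial in
theorem sum_ms (n : ℕ) : ∀ (s : ℕ → Bool) (f : Fin n → ℕ), Function.Injective f →
    ∑ σ : Equiv.Perm (Fin n), (X : ℕ[X]) ^ msLen s (List.ofFn fun i => f (σ i)) = genP n := by
  induction n with
  | zero => intro s f hf; simp [genP, msLen, msLenAux]
  | succ n ih =>
    intro s f hf
    rw [← Equiv.sum_comp Equiv.Perm.decomposeFin.symm, Fintype.sum_prod_type]
    obtain ⟨p0, hp0⟩ : ∃ p0, ∀ q, if s 0 then f p0 ≤ f q else f q ≤ f p0 := by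
      cases s 0
      · simpa using Finite.exists_max f
      · simpa using Finite.exists_min f
    have key : ∀ p, ∑ e : Equiv.Perm (Fin n), (X : ℕ[X]) ^ msLen s
        (List.ofFn fun i => f (Equiv.Perm.decomposeFin.symm (p, e) i)) =
        if p = p0 then X * genP n else genP n := by
      intro p
      have hinj : Function.Injective (fun i : Fin n => f (Equiv.swap 0 p i.succ)) := by
        intro i j hij
        simpa using hf hij
      have hl : ∀ e : Equiv.Perm (Fin n),
          (List.ofFn fun i => f (Equiv.Perm.decomposeFin.symm (p, e) i)) =
          f p :: List.ofFn (fun i => f (Equiv.swap 0 p (e i).succ)) := by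
        intro e
        rw [List.ofFn_succ]
        simp
      have hmem : ∀ (e : Equiv.Perm (Fin n)) (q : Fin (n + 1)), f q ∈
          (f p :: List.ofFn (fun i => f (Equiv.swap 0 p (e i).succ))) := by
        intro e q
        rw [← hl]
        rw [List.mem_ofFn]
        exact ⟨(Equiv.Perm.decomposeFin.symm (p, e)).symm q, by simp⟩
      have hmem' : ∀ (e : Equiv.Perm (Fin n)) x, x ∈
          (f p :: List.ofFn (fun i => f (Equiv.swap 0 p (e i).succ))) → ∃ q, f q = x := by
        intro e x hx
        rw [← hl] at hx
        rw [List.mem_ofFn] at hx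
        obtain ⟨i, hi⟩ := hx
        exact ⟨_, hi⟩
      have hp0e : ∀ e : Equiv.Perm (Fin n), IsExtr (s 0)
          (f p :: List.ofFn (fun i => f (Equiv.swap 0 p (e i).succ))) (f p0) := by
        intro e
        refine ⟨hmem e p0, fun x hx => ?_⟩
        obtain ⟨q, rfl⟩ := hmem' e x hx
        exact hp0 q
      split_ifs with hp
      · subst hp
        rw [← ih (fun i => s (i + 1)) _ hinj, Finset.mul_sum]
        refine Finset.sum_congr rfl fun e _ => ?_
        rw [hl, msLen_cons_extr (hp0e e), pow_add, pow_one]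
      · rw [← ih s _ hinj]
        refine Finset.sum_congr rfl fun e _ => ?_
        rw [hl, msLen_cons_not_extr]
        intro hE
        exact hp (hf (hE.unique (hp0e e)))
    simp_rw [key]
    rw [← Finset.add_sum_erase _ _ (Finset.mem_univ p0), if_pos rfl,
      Finset.sum_congr rfl (g := fun _ => genP n)
        (fun x hx => if_neg (Finset.ne_of_mem_erase hx))]
    simp [genP, add_mul]

/-- Removing the last element from a permutation. -/
def decLast (n : ℕ) : Equiv.Perm (Fin (n + 1)) ≃ Option (Fin n) × Equiv.Perm (Fin n) :=
  (Equiv.permCongr finSuccEquivLast).trans Equiv.Perm.decomposeOption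

theorem decLast_fst {n : ℕ} (π : Equiv.Perm (Fin (n + 1))) :
    (decLast n π).1 = none ↔ π (Fin.last n) = Fin.last n := by
  simp [decLast, Equiv.permCongr_apply, Equiv.apply_eq_iff_eq_symm_apply]

theorem decLast_some {n : ℕ} (π : Equiv.Perm (Fin (n + 1))) {y z : Fin n}
    (h : π y.castSucc = z.castSucc) : (decLast n π).2 y = z := by
  have : (Equiv.permCongr finSuccEquivLast π) (some y) = some z := by
    simp [Equiv.permCongr_apply, h]
  have h2 := Equiv.removeNone_some (Equiv.permCongr finSuccEquivLast π) ⟨z, this⟩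
  rw [this] at h2
  exact Option.some_injective _ h2

theorem decLast_none {n : ℕ} (π : Equiv.Perm (Fin (n + 1))) {y : Fin n}
    (h : π y.castSucc = Fin.last n) : π (Fin.last n) = ((decLast n π).2 y).castSucc := by
  have : (Equiv.permCongr finSuccEquivLast π) (some y) = none := by
    simp [Equiv.permCongr_apply, h]
  have h2 := Equiv.removeNone_none (Equiv.permCongr finSuccEquivLast π) this
  have h3 : (Equiv.permCongr finSuccEquivLast π) none = finSuccEquivLast (π (Fin.last n)) := by
    simp [Equiv.permCongr_apply]
  rw [h3] at h2
  have h4 := congrArg finSuccEquivLast.symm h2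
  simp only [Equiv.symm_apply_apply, finSuccEquivLast_symm_some] at h4
  exact h4.symm

theorem orb_fwd {n : ℕ} (π : Equiv.Perm (Fin (n + 1))) (k : ℕ) : ∀ {y z : Fin n},
    (π ^ k) y.castSucc = z.castSucc → ∃ j : ℕ, ((decLast n π).2 ^ j) y = z := by
  induction k using Nat.strong_induction_on with
  | _ k ih =>
  intro y z h
  cases k with
  | zero => exact ⟨0, by simpa using h⟩
  | succ k =>
    rw [pow_succ, Equiv.Perm.mul_apply] at h
    rcases Fin.eq_castSucc_or_eq_last (π y.castSucc) with ⟨w, hw⟩ | hw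
    · rw [hw] at h
      obtain ⟨j, hj⟩ := ih k (by omega) h
      exact ⟨j + 1, by rw [pow_succ, Equiv.Perm.mul_apply, decLast_some π hw, hj]⟩
    · rw [hw] at h
      cases k with
      | zero => simp at h; exact absurd h.symm (Fin.castSucc_ne_last z)
      | succ k =>
        rw [pow_succ, Equiv.Perm.mul_apply, decLast_none π hw] at h
        obtain ⟨j, hj⟩ := ih k (by omega) h
        exact ⟨j + 1, by rw [pow_succ, Equiv.Perm.mul_apply, hj]⟩

theorem orb_bwd {n : ℕ} (π : Equiv.Perm (Fin (n + 1))) (k : ℕ) : ∀ (y : Fin n),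
    ∃ j : ℕ, (π ^ j) y.castSucc = (((decLast n π).2 ^ k) y).castSucc := by
  induction k with
  | zero => intro y; exact ⟨0, by simp⟩
  | succ k ih =>
    intro y
    rw [pow_succ, Equiv.Perm.mul_apply]
    obtain ⟨j, hj⟩ := ih ((decLast n π).2 y)
    rcases Fin.eq_castSucc_or_eq_last (π y.castSucc) with ⟨w, hw⟩ | hw
    · refine ⟨j + 1, ?_⟩
      rw [← hj, decLast_some π hw, pow_succ, Equiv.Perm.mul_apply, hw]
    · refine ⟨j + 1 + 1, ?_⟩
      rw [← hj, pow_succ, Equiv.Perm.mul_apply, hw, pow_succ, Equiv.Perm.mul_apply,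
        decLast_none π hw]

theorem orbitMin_castSucc {n : ℕ} (π : Equiv.Perm (Fin (n + 1))) (x : Fin n) :
    IsOrbitMin π x.castSucc ↔ IsOrbitMin (decLast n π).2 x := by
  constructor
  · intro h k
    obtain ⟨j, hj⟩ := orb_bwd π k x
    have := h j
    rw [hj] at this
    simpa using this
  · intro h k
    rcases Fin.eq_castSucc_or_eq_last ((π ^ k) x.castSucc) with ⟨w, hw⟩ | hw
    · obtain ⟨j, hj⟩ := orb_fwd π k hw
      rw [hw, ← hj]
      simpa using h j
    · rw [hw]; exact Fin.le_last _

theorem orbitMin_last {n : ℕ} (π : Equiv.Perm (Fin (n + 1))) :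
    IsOrbitMin π (Fin.last n) ↔ (decLast n π).1 = none := by
  rw [decLast_fst]
  constructor
  · intro h
    have := h 1
    simpa [Fin.last_le_iff] using this
  · intro h k
    rw [Equiv.Perm.pow_apply_eq_self_of_apply_eq_self h]

open Classical in
theorem cycleCount_eq_sum {n : ℕ} (π : Equiv.Perm (Fin n)) :
    cycleCount π = ∑ x, if IsOrbitMin π x then 1 else 0 := by
  unfold cycleCount
  rw [Nat.card_eq_fintype_card, Fintype.card_subtype, Finset.card_filter]

theorem cycleCount_succ {n : ℕ} (π : Equiv.Perm (Fin (n + 1))) :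
    cycleCount π = cycleCount (decLast n π).2 + if (decLast n π).1 = none then 1 else 0 := by
  classical
  rw [cycleCount_eq_sum, cycleCount_eq_sum, Fin.sum_univ_castSucc]
  simp only [orbitMin_castSucc, orbitMin_last]

open Polynomial in
theorem sum_cyc (n : ℕ) :
    ∑ σ : Equiv.Perm (Fin n), (X : ℕ[X]) ^ cycleCount σ = genP n := by
  induction n with
  | zero => simp [genP, cycleCount]
  | succ n ih =>
    simp_rw [cycleCount_succ]
    rw [Equiv.sum_comp (decLast n)
      (fun q => (X : ℕ[X]) ^ (cycleCount q.2 + if q.1 = none then 1 else 0)),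
      Fintype.sum_prod_type, Fintype.sum_option]
    simp [pow_succ, ← Finset.sum_mul, ih, genP]
    ring

open Polynomial in
theorem card_eq_coeff {α : Type*} [Fintype α] (g : α → ℕ) (k : ℕ) :
    Nat.card {a : α // g a = k} = (∑ a, (X : ℕ[X]) ^ g a).coeff k := by
  classical
  rw [Nat.card_eq_fintype_card, Fintype.card_subtype, Finset.card_filter, Polynomial.finsetSum_coeff]
  simp [Polynomial.coeff_X_pow, eq_comm]

/-- for any min/max sequence `s` (`true` = min, `false` = max),
`m_s` is distributed like the number of cycles (Stirling numbers). -/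
theorem stmt15 (s : ℕ → Bool) (n k : ℕ) (hn : 1 ≤ n) (hk : 1 ≤ k) :
    Nat.card {π : Equiv.Perm (Fin n) // msStat s π = k} =
      Nat.card {π : Equiv.Perm (Fin n) // cycleCount π = k} := by
  rw [card_eq_coeff, card_eq_coeff, sum_cyc]
  unfold msStat oneLine
  rw [sum_ms n s (fun i => (i : ℕ)) Fin.val_injective]
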